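/- For every integer n ≥ 8, h(n,5) ≤ (7n + c)/6, where c = 0, 35, 16, 27, 8, 28 according as n ≡ 0, 1, 2, 3, 4, 5 (mod 6) respectively. -/

import Mathlib

/-!
The bound comes from disjoint unions of copies of three graphs: the domino (two 4-cycles sharing
an edge; 6 vertices, 7 edges), `K₄` (4 vertices, 6 edges) and `K₅` minus an edge (5 vertices,
9 edges). Each of them is 5-saturated. So is every disjoint union of them, because every
vertex `u` of these graphs satisfies a further condition: there is a path `a, b, c, u` with
`deg a ≤ deg b ≤ deg c ≤ deg u + 1`. If an edge is added between vertices `u`, `v` of two different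
components, with `deg u ≤ deg v`, then `deg u` grows by one and `a, b, c, u, v` is a degree monotone
path on five vertices. The conjunction of 5-saturation and this condition (`Good`) is
therefore preserved by disjoint unions (`Good.sum`), and it is checked by evaluation on the three
pieces (`good_of_check`).

For `n ≡ 0, 1, 2, 3, 4, 5 (mod 6)` one takes, besides dominoes, nothing, `2 K₄ + (K₅ - e)`, `2 K₄`,
`K₄ + (K₅ - e)`, `K₄`, and `K₅ - e` respectively.
-/

open SimpleGraph

variable {V : Type*}

/-- The degree of a vertex `v`: the number of neighbours of `v`. -/
noncomputable def gdeg (G : SimpleGraph V) (v : V) : ℕ := (G.neighborSet v).ncard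

/-- A walk is degree monotone if the sequence of degrees of the vertices in the
order in which they appear on the walk is monotone (non-decreasing or non-increasing). -/
def IsDegMonotone (G : SimpleGraph V) {u v : V} (p : G.Walk u v) : Prop :=
  (p.support.map (gdeg G)).Chain' (· ≤ ·) ∨ (p.support.map (gdeg G)).Chain' (· ≥ ·)

/-- `mp G` is the maximum number of vertices of a degree monotone path in `G`. -/
noncomputable def mp (G : SimpleGraph V) : ℕ :=
  sSup {n | ∃ (u v : V) (p : G.Walk u v), p.IsPath ∧ IsDegMonotone G p ∧ p.support.length = n}

/-- The graph obtained from `G` by adding the edge `uv`. -/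
def addEdge (G : SimpleGraph V) (u v : V) : SimpleGraph V :=
  G ⊔ fromEdgeSet {s(u, v)}

/-- `G` is saturated if adding any edge between non-adjacent vertices increases `mp`. -/
def Saturated (G : SimpleGraph V) : Prop :=
  ∀ u v : V, u ≠ v → ¬ G.Adj u v → mp G < mp (addEdge G u v)

/-- `G` is `k`-saturated if `mp G < k` and adding any edge between non-adjacent
vertices creates a degree monotone path on at least `k` vertices. -/
def KSaturated (k : ℕ) (G : SimpleGraph V) : Prop :=
  mp G < k ∧ ∀ u v : V, u ≠ v → ¬ G.Adj u v → k ≤ mp (addEdge G u v)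

/-- `hSat n k` is the minimum number of edges of a `k`-saturated graph on `n` vertices. -/
noncomputable def hSat (n k : ℕ) : ℕ :=
  sInf {m | ∃ G : SimpleGraph (Fin n), KSaturated k G ∧ G.edgeSet.ncard = m}

/-- `a, b, c, d, e` are the consecutive vertices of a path with non-decreasing degrees. The conditions
are ordered so that a search for such a path by evaluation can prune early. The distinctness of
consecutive vertices is implied by adjacency. -/
def FivePath (R : V → V → Prop) (δ : V → ℕ) (a b c d e : V) : Prop :=
  (R a b ∧ δ a ≤ δ b) ∧ (R b c ∧ δ b ≤ δ c ∧ a ≠ c) ∧ (R c d ∧ δ c ≤ δ d ∧ a ≠ d ∧ b ≠ d) ∧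
    (R d e ∧ δ d ≤ δ e ∧ a ≠ e ∧ b ≠ e ∧ c ≠ e)

/-- `G` contains a path on five vertices with non-decreasing degrees. -/
def HasFive (G : SimpleGraph V) : Prop :=
  ∃ a b c d e, FivePath G.Adj (gdeg G) a b c d e

/-- There is a path `a, b, c, u` whose degrees are non-decreasing once the degree of `u` is raised
by one. -/
def Reach (R : V → V → Prop) (δ : V → ℕ) (u : V) : Prop :=
  ∃ c, (R c u ∧ δ c ≤ δ u + 1) ∧ ∃ b, (R b c ∧ δ b ≤ δ c ∧ b ≠ u) ∧
    ∃ a, R a b ∧ δ a ≤ δ b ∧ a ≠ u ∧ a ≠ c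

/-- 5-saturation, together with the condition on every vertex that makes 5-saturation survive
disjoint unions. -/
structure Good (G : SimpleGraph V) : Prop where
  noFive : ¬ HasFive G
  sat : ∀ u v, u ≠ v → ¬ G.Adj u v → HasFive (addEdge G u v)
  reach : ∀ u, Reach G.Adj (gdeg G) u

/-! ### Five-vertex paths and `mp` -/

lemma mp_lt_five {G : SimpleGraph V} (h : ¬ HasFive G) : mp G < 5 := by
  refine Nat.lt_succ_of_le (csSup_le' ?_)
  rintro _ ⟨u, v, p, hp, hm, rfl⟩
  by_contra! hlen
  have hadj := p.isChain_adj_support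
  have hnd := hp.support_nodup
  unfold IsDegMonotone at hm
  generalize p.support = l at *
  match l, hlen with
  | a :: b :: c :: d :: e :: l, _ =>
    simp only [List.isChain_cons_cons] at hadj
    obtain ⟨h1, h2, h3, h4, -⟩ := hadj
    simp only [List.nodup_cons, List.mem_cons, not_or] at hnd
    obtain ⟨⟨n1, n2, n3, n4, -⟩, ⟨n5, n6, n7, -⟩, ⟨n8, n9, -⟩, ⟨n10, -⟩, -⟩ := hnd
    apply h
    rcases hm with hm | hm
    · simp only [List.map_cons, List.Chain', List.isChain_cons_cons] at hm
      obtain ⟨m1, m2, m3, m4, -⟩ := hm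
      exact ⟨a, b, c, d, e, ⟨h1, m1⟩, ⟨h2, m2, n2⟩, ⟨h3, m3, n3, n6⟩, ⟨h4, m4, n4, n7, n9⟩⟩
    · simp only [List.map_cons, List.Chain', List.isChain_cons_cons] at hm
      obtain ⟨m1, m2, m3, m4, -⟩ := hm
      exact ⟨e, d, c, b, a, ⟨h4.symm, m4⟩, ⟨h3.symm, m3, Ne.symm n9⟩,
        ⟨h2.symm, m2, Ne.symm n7, Ne.symm n6⟩, ⟨h1.symm, m1, Ne.symm n4, Ne.symm n3, Ne.symm n2⟩⟩

lemma five_le_mp [Fintype V] {G : SimpleGraph V} (h : HasFive G) : 5 ≤ mp G := by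
  obtain ⟨a, b, c, d, e, ⟨h1, m1⟩, ⟨h2, m2, n2⟩, ⟨h3, m3, n3, n6⟩, ⟨h4, m4, n4, n7, n9⟩⟩ := h
  refine le_csSup ⟨Fintype.card V, ?_⟩ ?_
  · rintro _ ⟨u, v, p, hp, -, rfl⟩
    exact hp.support_nodup.length_le_card
  · refine ⟨a, e, .cons h1 (.cons h2 (.cons h3 (.cons h4 .nil))), ?_, Or.inl ?_, ?_⟩
    · simp [Walk.isPath_def, h1.ne, h2.ne, h3.ne, h4.ne, n2, n3, n6, n4, n7, n9]
    · simp only [Walk.support_cons, Walk.support_nil, List.map_cons, List.map_nil]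
      exact .cons_cons m1 (.cons_cons m2 (.cons_cons m3 (.cons_cons m4 (.singleton _))))
    · simp

lemma Good.kSaturated [Fintype V] {G : SimpleGraph V} (h : Good G) : KSaturated 5 G :=
  ⟨mp_lt_five h.noFive, fun u v huv hn => five_le_mp (h.sat u v huv hn)⟩

/-! ### Embeddings onto unions of components -/

/-- `f` identifies `G` with a union of connected components of `H`. -/
structure LocalEmb {W : Type*} (G : SimpleGraph V) (H : SimpleGraph W) (f : V → W) : Prop where
  inj : Function.Injective f
  adj : ∀ a w, H.Adj (f a) w ↔ ∃ b, G.Adj a b ∧ f b = w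

section LocalEmb

variable {W : Type*} {G : SimpleGraph V} {H : SimpleGraph W} {f : V → W}

lemma LocalEmb.adj_iff (h : LocalEmb G H f) {a b : V} : H.Adj (f a) (f b) ↔ G.Adj a b := by
  rw [h.adj]
  constructor
  · rintro ⟨c, hc, hcb⟩
    rwa [← h.inj hcb]
  · exact fun hab => ⟨b, hab, rfl⟩

lemma LocalEmb.gdeg (h : LocalEmb G H f) (a : V) : gdeg H (f a) = gdeg G a := by
  have : H.neighborSet (f a) = f '' G.neighborSet a := by
    ext w
    simp [h.adj]
  rw [_root_.gdeg, this, Set.ncard_image_of_injective _ h.inj, _root_.gdeg]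

lemma LocalEmb.fivePath (h : LocalEmb G H f) {a b c d e : V} :
    FivePath H.Adj (_root_.gdeg H) (f a) (f b) (f c) (f d) (f e) ↔
      FivePath G.Adj (_root_.gdeg G) a b c d e := by
  simp only [FivePath, h.adj_iff, h.gdeg, h.inj.ne_iff]

lemma LocalEmb.hasFive (h : LocalEmb G H f) (hG : HasFive G) : HasFive H := by
  obtain ⟨a, b, c, d, e, hp⟩ := hG
  exact ⟨_, _, _, _, _, h.fivePath.2 hp⟩

/-- A path starting inside a union of components stays there. -/
lemma LocalEmb.hasFive_of (h : LocalEmb G H f) {a : V} {b c d e : W}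
    (hp : FivePath H.Adj (_root_.gdeg H) (f a) b c d e) : HasFive G := by
  obtain ⟨b, -, rfl⟩ := (h.adj _ _).1 hp.1.1
  obtain ⟨c, -, rfl⟩ := (h.adj _ _).1 hp.2.1.1
  obtain ⟨d, -, rfl⟩ := (h.adj _ _).1 hp.2.2.1.1
  obtain ⟨e, -, rfl⟩ := (h.adj _ _).1 hp.2.2.2.1
  exact ⟨_, _, _, _, _, h.fivePath.1 hp⟩

lemma LocalEmb.reach (h : LocalEmb G H f) {u : V} (hu : Reach G.Adj (_root_.gdeg G) u) :
    Reach H.Adj (_root_.gdeg H) (f u) := by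
  obtain ⟨c, ⟨c1, c2⟩, b, ⟨b1, b2, b3⟩, a, a1, a2, a3, a4⟩ := hu
  refine ⟨f c, ?_, f b, ?_, f a, ?_⟩ <;> simp_all [h.adj_iff, h.gdeg, h.inj.eq_iff]

lemma addEdge_adj {u v x y : V} :
    (addEdge G u v).Adj x y ↔ G.Adj x y ∨ ((x = u ∧ y = v ∨ x = v ∧ y = u) ∧ x ≠ y) := by
  simp [addEdge]

lemma addEdge_comm (G : SimpleGraph V) (u v : V) : addEdge G u v = addEdge G v u := by
  rw [addEdge, addEdge, Sym2.eq_swap]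

lemma LocalEmb.addEdge (h : LocalEmb G H f) (u v : V) :
    LocalEmb (addEdge G u v) (addEdge H (f u) (f v)) f := by
  refine ⟨h.inj, fun a w => ?_⟩
  simp only [addEdge_adj, h.adj]
  constructor
  · rintro (⟨b, hb, rfl⟩ | ⟨⟨h1, rfl⟩ | ⟨h1, rfl⟩, h2⟩)
    · exact ⟨b, .inl hb, rfl⟩
    · exact ⟨v, .inr ⟨.inl ⟨h.inj h1, rfl⟩, fun h3 => h2 (h3 ▸ rfl)⟩, rfl⟩
    · exact ⟨u, .inr ⟨.inr ⟨h.inj h1, rfl⟩, fun h3 => h2 (h3 ▸ rfl)⟩, rfl⟩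
  · rintro ⟨b, hb | ⟨⟨rfl, rfl⟩ | ⟨rfl, rfl⟩, h2⟩, rfl⟩
    · exact .inl ⟨b, hb, rfl⟩
    · exact .inr ⟨.inl ⟨rfl, rfl⟩, h.inj.ne h2⟩
    · exact .inr ⟨.inr ⟨rfl, rfl⟩, h.inj.ne h2⟩

lemma Good.map (hG : Good G) (e : G ≃g H) : Good H := by
  have h : LocalEmb G H e := ⟨e.injective, fun a w => by
    constructor
    · intro haw
      exact ⟨e.symm w, by rw [← e.map_adj_iff]; simpa using haw, by simp⟩
    · rintro ⟨b, hb, rfl⟩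
      exact e.map_adj_iff.2 hb⟩
  refine ⟨?_, ?_, ?_⟩
  · rintro ⟨a, b, c, d, x, hp⟩
    obtain ⟨a, rfl⟩ := e.surjective a
    exact hG.noFive (h.hasFive_of hp)
  · intro u v huv hn
    obtain ⟨u, rfl⟩ := e.surjective u
    obtain ⟨v, rfl⟩ := e.surjective v
    exact (h.addEdge u v).hasFive
      (hG.sat u v (fun h' => huv (h' ▸ rfl)) (fun h' => hn (h.adj_iff.2 h')))
  · intro u
    obtain ⟨u, rfl⟩ := e.surjective u
    exact h.reach (hG.reach u)

lemma localEmb_inl (G : SimpleGraph V) (H : SimpleGraph W) : LocalEmb G (G ⊕g H) Sum.inl :=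
  ⟨Sum.inl_injective, by rintro a (w | w) <;> simp⟩

lemma localEmb_inr (G : SimpleGraph V) (H : SimpleGraph W) : LocalEmb H (G ⊕g H) Sum.inr :=
  ⟨Sum.inr_injective, by rintro a (w | w) <;> simp⟩

end LocalEmb

/-! ### Disjoint unions -/

lemma gdeg_addEdge_of_ne {G : SimpleGraph V} {u v x : V} (hu : x ≠ u) (hv : x ≠ v) :
    gdeg (addEdge G u v) x = gdeg G x := by
  have : (addEdge G u v).neighborSet x = G.neighborSet x := by
    ext y
    simp [addEdge_adj, hu, hv]
  rw [gdeg, this, gdeg]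

lemma gdeg_addEdge_left [Finite V] {G : SimpleGraph V} {u v : V} (huv : u ≠ v)
    (hn : ¬ G.Adj u v) : gdeg (addEdge G u v) u = gdeg G u + 1 := by
  have : (addEdge G u v).neighborSet u = insert v (G.neighborSet u) := by
    ext y
    simp only [mem_neighborSet, addEdge_adj, Set.mem_insert_iff]
    constructor
    · rintro (h | ⟨⟨-, h⟩ | ⟨h, -⟩, -⟩)
      exacts [.inr h, .inl h, absurd h huv]
    · rintro (rfl | h)
      · exact .inr ⟨.inl ⟨trivial, rfl⟩, huv⟩
      · exact .inl h
  rw [gdeg, this, Set.ncard_insert_of_notMem (by simpa using hn), gdeg]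

/-- The path `a, b, c, u` provided by `Reach` extends by the new edge `uv`, when `v` lies in
another component and has at least the degree of `u`. -/
lemma hasFive_addEdge_of_reach [Finite V] {G : SimpleGraph V} {u v : V} (huv : ¬ G.Reachable u v)
    (hr : Reach G.Adj (gdeg G) u) (hd : gdeg G u ≤ gdeg G v) : HasFive (addEdge G u v) := by
  obtain ⟨c, ⟨c1, c2⟩, b, ⟨b1, b2, b3⟩, a, a1, a2, a3, a4⟩ := hr
  have hne : u ≠ v := fun h => huv (h ▸ .refl _)
  have hn : ¬ G.Adj u v := fun h => huv h.reachable
  have rc : G.Reachable u c := c1.symm.reachable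
  have rb : G.Reachable u b := rc.trans b1.symm.reachable
  have ra : G.Reachable u a := rb.trans a1.symm.reachable
  have hcv : c ≠ v := fun h => huv (h ▸ rc)
  have hbv : b ≠ v := fun h => huv (h ▸ rb)
  have hav : a ≠ v := fun h => huv (h ▸ ra)
  have du := gdeg_addEdge_left hne hn
  have dv := gdeg_addEdge_left hne.symm (fun h => hn h.symm)
  rw [addEdge_comm] at dv
  have da := gdeg_addEdge_of_ne (G := G) a3 hav
  have db := gdeg_addEdge_of_ne (G := G) b3 hbv
  have dc := gdeg_addEdge_of_ne (G := G) c1.ne hcv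
  refine ⟨a, b, c, u, v, ⟨?_, ?_⟩, ⟨?_, ?_, a4⟩, ⟨?_, ?_, a3, b3⟩, ⟨?_, ?_, hav, hbv, hcv⟩⟩
  any_goals omega
  · exact addEdge_adj.2 (.inl a1)
  · exact addEdge_adj.2 (.inl b1)
  · exact addEdge_adj.2 (.inl c1)
  · exact addEdge_adj.2 (.inr ⟨.inl ⟨rfl, rfl⟩, hne⟩)

lemma Good.sum {W : Type*} [Finite V] [Finite W] {G : SimpleGraph V} {H : SimpleGraph W}
    (hG : Good G) (hH : Good H) : Good (G ⊕g H) := by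
  have hl := localEmb_inl G H
  have hr := localEmb_inr G H
  have hreach : ∀ u, Reach (G ⊕g H).Adj (gdeg (G ⊕g H)) u := by
    rintro (u | u)
    exacts [hl.reach (hG.reach u), hr.reach (hH.reach u)]
  have cross : ∀ u v, HasFive (addEdge (G ⊕g H) (.inl u) (.inr v)) := by
    intro u v
    have huv := not_reachable_sum_inl_inr (G := G) (H := H) u v
    rcases le_total (gdeg (G ⊕g H) (.inl u)) (gdeg (G ⊕g H) (.inr v)) with h | h
    · exact hasFive_addEdge_of_reach huv (hreach _) h
    · rw [addEdge_comm]
      exact hasFive_addEdge_of_reach (fun h => huv h.symm) (hreach _) h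
  refine ⟨?_, ?_, hreach⟩
  · rintro ⟨a | a, b, c, d, e, hp⟩
    exacts [hG.noFive (hl.hasFive_of hp), hH.noFive (hr.hasFive_of hp)]
  · rintro (u | u) (v | v) huv hn
    · exact (hl.addEdge u v).hasFive (hG.sat u v (by simpa using huv) (by simpa using hn))
    · exact cross u v
    · rw [addEdge_comm]
      exact cross v u
    · exact (hr.addEdge u v).hasFive (hH.sat u v (by simpa using huv) (by simpa using hn))

/-- There is a good graph with `n` vertices and `m` edges. -/
def Realizable (n m : ℕ) : Prop :=
  ∃ G : SimpleGraph (Fin n), Good G ∧ G.edgeSet.ncard = m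

lemma Realizable.add {n m n' m' : ℕ} (h : Realizable n m) (h' : Realizable n' m') :
    Realizable (n + n') (m + m') := by
  classical
  obtain ⟨G, hG, rfl⟩ := h
  obtain ⟨H, hH, rfl⟩ := h'
  let e : (G ⊕g H) ≃g (G ⊕g H).map finSumFinEquiv.toEmbedding := Iso.map finSumFinEquiv (G ⊕g H)
  refine ⟨_, (hG.sum hH).map e, ?_⟩
  rw [← Nat.card_coe_set_eq, ← Nat.card_coe_set_eq, ← Nat.card_coe_set_eq, ← Nat.card_sum]
  exact Nat.card_congr (e.mapEdgeSet.symm.trans edgeSetSumEquiv)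

lemma Realizable.hSat_le {n m : ℕ} (h : Realizable n m) : hSat n 5 ≤ m := by
  obtain ⟨G, hG, hm⟩ := h
  exact Nat.sInf_le ⟨G, hG.kSaturated, hm⟩

/-! ### The three pieces -/

/-- The number of `y` with `R x y`: the degree of `x`, in a form that can be evaluated. -/
def cdeg {n : ℕ} (R : Fin n → Fin n → Prop) [DecidableRel R] (x : Fin n) : ℕ :=
  (Finset.univ.filter (R x)).card

lemma gdeg_eq_cdeg {n : ℕ} (G : SimpleGraph (Fin n)) (R : Fin n → Fin n → Prop) [DecidableRel R]
    (h : ∀ x y, G.Adj x y ↔ R x y) : gdeg G = cdeg R := by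
  funext x
  rw [gdeg, cdeg, ← Set.ncard_coe_finset]
  congr 1
  ext y
  simp [h]

/-- The graph obtained from `R` by adding the edge `uv`, as a decidable relation. -/
abbrev addRel {n : ℕ} (R : Fin n → Fin n → Prop) (u v x y : Fin n) : Prop :=
  R x y ∨ ((x = u ∧ y = v ∨ x = v ∧ y = u) ∧ x ≠ y)

/-- A nested form of the existence of a `FivePath`, in which every prefix of the path is tested before
it is extended. -/
abbrev Search {n : ℕ} (R : Fin n → Fin n → Prop) (δ : Fin n → ℕ) : Prop :=
  ∃ a b, (R a b ∧ δ a ≤ δ b) ∧ ∃ c, (R b c ∧ δ b ≤ δ c ∧ a ≠ c) ∧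
    ∃ d, (R c d ∧ δ c ≤ δ d ∧ a ≠ d ∧ b ≠ d) ∧
      ∃ e, (R d e ∧ δ d ≤ δ e ∧ a ≠ e ∧ b ≠ e ∧ c ≠ e)

lemma hasFive_iff_search {n : ℕ} (G : SimpleGraph (Fin n)) (R : Fin n → Fin n → Prop)
    [DecidableRel R] (h : ∀ x y, G.Adj x y ↔ R x y) : HasFive G ↔ Search R (cdeg R) := by
  simp only [HasFive, FivePath, gdeg_eq_cdeg G R h, h, Search, exists_and_left]

lemma good_of_check {n : ℕ} (G : SimpleGraph (Fin n)) [DecidableRel G.Adj]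
    (h1 : ¬ Search G.Adj (cdeg G.Adj))
    (h2 : ∀ u v, u ≠ v → ¬ G.Adj u v → Search (addRel G.Adj u v) (cdeg (addRel G.Adj u v)))
    (h3 : ∀ u, Reach G.Adj (cdeg G.Adj) u) : Good G := by
  refine ⟨?_, fun u v huv hn => ?_, ?_⟩
  · rwa [hasFive_iff_search G G.Adj fun _ _ => Iff.rfl]
  · rw [hasFive_iff_search _ (addRel G.Adj u v) fun _ _ => addEdge_adj]
    exact h2 u v huv hn
  · rwa [gdeg_eq_cdeg G G.Adj fun _ _ => Iff.rfl]

/-- The domino: the 6-cycle `0, 1, 2, 3, 4, 5` with the chord `03`. -/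
def domino : SimpleGraph (Fin 6) where
  Adj x y := y = x + 1 ∨ x = y + 1 ∨ (x = 0 ∧ y = 3) ∨ (x = 3 ∧ y = 0)
  symm := ⟨by decide⟩
  loopless := ⟨by decide⟩

instance : DecidableRel domino.Adj := fun x y =>
  inferInstanceAs (Decidable (y = x + 1 ∨ x = y + 1 ∨ (x = 0 ∧ y = 3) ∨ (x = 3 ∧ y = 0)))

/-- `K₅` without the edge `01`. -/
def fiveMinusEdge : SimpleGraph (Fin 5) where
  Adj x y := x ≠ y ∧ ¬ (x = 0 ∧ y = 1) ∧ ¬ (x = 1 ∧ y = 0)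
  symm := ⟨by decide⟩
  loopless := ⟨by decide⟩

instance : DecidableRel fiveMinusEdge.Adj := fun x y =>
  inferInstanceAs (Decidable (x ≠ y ∧ ¬ (x = 0 ∧ y = 1) ∧ ¬ (x = 1 ∧ y = 0)))

instance {n : ℕ} (R : Fin n → Fin n → Prop) [DecidableRel R] (δ : Fin n → ℕ) (u : Fin n) :
    Decidable (Reach R δ u) := by
  unfold Reach
  infer_instance

lemma ncard_edgeSet {n : ℕ} (G : SimpleGraph (Fin n)) [DecidableRel G.Adj] :
    G.edgeSet.ncard = G.edgeFinset.card := by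
  rw [← coe_edgeFinset, Set.ncard_coe_finset]

lemma realizable_domino : Realizable 6 7 := by
  refine ⟨domino, good_of_check _ ?_ ?_ ?_, ?_⟩
  · decide +kernel
  · decide +kernel
  · decide +kernel
  · rw [ncard_edgeSet]
    decide +kernel

lemma realizable_k4 : Realizable 4 6 := by
  refine ⟨⊤, good_of_check _ ?_ ?_ ?_, ?_⟩
  · decide +kernel
  · decide +kernel
  · decide +kernel
  · rw [ncard_edgeSet]
    decide +kernel

lemma realizable_fiveMinusEdge : Realizable 5 9 := by
  refine ⟨fiveMinusEdge, good_of_check _ ?_ ?_ ?_, ?_⟩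
  · decide +kernel
  · decide +kernel
  · decide +kernel
  · rw [ncard_edgeSet]
    decide +kernel

lemma Realizable.add_dominoes {n m : ℕ} (h : Realizable n m) (k : ℕ) :
    Realizable (n + 6 * k) (m + 7 * k) := by
  induction k with
  | zero => exact h
  | succ k ih => exact ih.add realizable_domino

theorem stmt_11 (n : ℕ) (hn : 8 ≤ n) (c : ℕ)
    (hc : c = [0, 35, 16, 27, 8, 28].getD (n % 6) 0) :
    hSat n 5 ≤ (7 * n + c) / 6 := by
  -- It suffices to complete some union of the three pieces with dominoes.
  have key : ∀ {n₀ m₀ : ℕ}, Realizable n₀ m₀ → n₀ ≤ n → n % 6 = n₀ % 6 →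
      6 * m₀ ≤ 7 * n₀ + c → hSat n 5 ≤ (7 * n + c) / 6 := by
    intro n₀ m₀ h hle hmod hm
    obtain ⟨k, rfl⟩ : ∃ k, n = n₀ + 6 * k := ⟨(n - n₀) / 6, by omega⟩
    refine (h.add_dominoes k).hSat_le.trans ?_
    omega
  have hlt : n % 6 < 6 := Nat.mod_lt _ (by norm_num)
  have h44 := realizable_k4.add realizable_k4
  interval_cases hr : n % 6 <;> simp at hc
  · exact key realizable_domino (by omega) (by omega) (by omega)
  · exact key (h44.add realizable_fiveMinusEdge) (by omega) (by omega) (by omega)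
  · exact key h44 (by omega) (by omega) (by omega)
  · exact key (realizable_k4.add realizable_fiveMinusEdge) (by omega) (by omega) (by omega)
  · exact key realizable_k4 (by omega) (by omega) (by omega)
  · exact key realizable_fiveMinusEdge (by omega) (by omega) (by omega)
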